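/- Let Λ > 0, κ > 0 and R > √(3/Λ). There exist ε > 0, C > 0 and Ĥ > 0 (depending only on Λ, κ, R) such that for every C¹ solution h : [0,∞)×[0,R] → ℝ of the reduced Einstein-Λ-scalar field equation Dh = G(h − h̄) with sup_{u≥0,0≤r≤R}(|h(u,r)| + |∂_r h(u,r)|) < ε, the energy ℰ₁(u) := sup_{0≤r≤R}|∂_r h(u,r)| decays exponentially: ℰ₁(u) ≤ C ℰ₁(0) e^{−2Ĥu} for all u ≥ 0. -/

import Mathlib

noncomputable section

open Real Set

/-- Radial average `h̄(u,r) = (1/r)∫₀ʳ h(u,s) ds`, with `h̄(u,0) = h(u,0)`. -/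
def radAvg (h : ℝ → ℝ → ℝ) (u r : ℝ) : ℝ :=
  if r = 0 then h u 0 else (1 / r) * ∫ s in (0:ℝ)..r, h u s

/-- Metric coefficient `f(u,r) = exp((κ/2)∫₀ʳ (h−h̄)²/s ds)`. -/
def metricF (κ : ℝ) (h : ℝ → ℝ → ℝ) (u r : ℝ) : ℝ :=
  Real.exp ((κ / 2) * ∫ s in (0:ℝ)..r, (h u s - radAvg h u s) ^ 2 / s)

/-- Metric coefficient `f̃(u,r) = (1/r)∫₀ʳ f ds − (Λ/r)∫₀ʳ f s² ds`, with `f̃(u,0)=1`. -/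
def metricFt (Λ κ : ℝ) (h : ℝ → ℝ → ℝ) (u r : ℝ) : ℝ :=
  if r = 0 then 1
  else (1 / r) * (∫ s in (0:ℝ)..r, metricF κ h u s)
    - (Λ / r) * (∫ s in (0:ℝ)..r, metricF κ h u s * s ^ 2)

/-- Zeroth order coefficient `G(u,r) = (1/(2r))[(f − f̃) − Λ f r²]`. -/
def coefG (Λ κ : ℝ) (h : ℝ → ℝ → ℝ) (u r : ℝ) : ℝ :=
  (1 / (2 * r)) * ((metricF κ h u r - metricFt Λ κ h u r) - Λ * metricF κ h u r * r ^ 2)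

/-- Partial derivative of `h` in the Bondi time `u`, one-sided on `[0,∞)`. -/
def pdU (h : ℝ → ℝ → ℝ) (u r : ℝ) : ℝ :=
  derivWithin (fun u' => h u' r) (Ici 0) u

/-- Partial derivative of `h` in the radial coordinate `r`, on `[0,R]`. -/
def pdR (R : ℝ) (h : ℝ → ℝ → ℝ) (u r : ℝ) : ℝ :=
  derivWithin (fun r' => h u r') (Icc 0 R) r

/-- `h : [0,∞)×[0,R] → ℝ` is a C¹ solution of the reduced Einstein-Λ-scalar field
equation `Dh = G(h − h̄)`: it is continuous with continuous partial derivatives on the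
rectangular domain and satisfies the equation for `0 < r ≤ R`. -/
def IsC1Solution (Λ κ R : ℝ) (h : ℝ → ℝ → ℝ) : Prop :=
  ContinuousOn (fun p : ℝ × ℝ => h p.1 p.2) (Ici 0 ×ˢ Icc 0 R) ∧
  (∀ u ∈ Ici (0:ℝ), ∀ r ∈ Icc (0:ℝ) R,
      DifferentiableWithinAt ℝ (fun u' => h u' r) (Ici 0) u ∧
      DifferentiableWithinAt ℝ (fun r' => h u r') (Icc 0 R) r) ∧
  ContinuousOn (fun p : ℝ × ℝ => pdU h p.1 p.2) (Ici 0 ×ˢ Icc 0 R) ∧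
  ContinuousOn (fun p : ℝ × ℝ => pdR R h p.1 p.2) (Ici 0 ×ˢ Icc 0 R) ∧
  ∀ u ∈ Ici (0:ℝ), ∀ r ∈ Ioc (0:ℝ) R,
    pdU h u r - metricFt Λ κ h u r / 2 * pdR R h u r
      = coefG Λ κ h u r * (h u r - radAvg h u r)

/-!
The coefficient `f̃` is the running mean of `P = f (1 - Λ s²)`, hence `∂_r f̃ = (P - f̃) / r = 2G`.
When `∂_r h` is small, `f` is close to `1` and `f̃` is close to the de Sitter value `1 - Λ r² / 3`,
which is positive at the center and negative at `R`, beyond the cosmological horizon `√(3 / Λ)`: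
the characteristics leave `[0, R]` through both ends, so no boundary data enter.

Since `h` is only `C¹`, the transport equation for `∂_r h` is not available. Instead, a maximum
principle in two points propagates `|h(u,x) - h(u,y)| ≤ A e^{-u/(8R)} |ψ x - ψ y|` for a fixed
increasing concave weight `ψ`. At a first touching point `x > y`, the difference of the two
right-hand sides is at most that of the flux `f̃ A ψ' + 2G (A ψ + K - h̄)`, whose derivative in `r`
is negative: the concavity of `ψ` contributes near the center, the redshift `2G ψ' < 0` near `R`.
Letting `x → y` gives the decay of `∂_r h`.
-/

open scoped NNReal Topology

section RadialMean

/-- The mean of `g` over `[0, r]`. Integrating over `[0, 1]` makes its value at `r = 0` equal to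
`g 0`, and makes it continuous there when `g` is. -/
def radialMean (g : ℝ → ℝ) (r : ℝ) : ℝ := ∫ t in (0 : ℝ)..1, g (r * t)

variable {g : ℝ → ℝ} {r R : ℝ}

lemma radialMean_zero : radialMean g 0 = g 0 := by
  simp [radialMean]

lemma radialMean_neg : radialMean (-g) r = -radialMean g r := by
  simp [radialMean]

lemma radialMean_of_ne_zero (hr : r ≠ 0) : radialMean g r = r⁻¹ * ∫ s in (0 : ℝ)..r, g s := by
  simp [radialMean, intervalIntegral.integral_comp_mul_left g hr]

lemma mul_mem_Icc_zero {t : ℝ} (hr : r ∈ Icc 0 R) (ht : t ∈ Icc 0 1) : r * t ∈ Icc 0 R :=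
  ⟨mul_nonneg hr.1 ht.1, (mul_le_of_le_one_right hr.1 ht.2).trans hr.2⟩

lemma intervalIntegrable_comp_mul_left (hg : ContinuousOn g (Icc 0 R)) (hr : r ∈ Icc 0 R) :
    IntervalIntegrable (fun t => g (r * t)) MeasureTheory.volume 0 1 := by
  apply ContinuousOn.intervalIntegrable_of_Icc zero_le_one
  exact hg.comp (by fun_prop) fun t ht => mul_mem_Icc_zero hr ht

lemma radialMean_add_const_mul_sq (c : ℝ) (hg : ContinuousOn g (Icc 0 R)) (hr : r ∈ Icc 0 R) :
    radialMean (fun s => g s + c * s ^ 2) r = radialMean g r + c * r ^ 2 / 3 := by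
  have hsq : Continuous fun t : ℝ => c * (r * t) ^ 2 := by fun_prop
  simp only [radialMean]
  rw [intervalIntegral.integral_add (intervalIntegrable_comp_mul_left hg hr)
    (hsq.intervalIntegrable 0 1)]
  simp only [mul_pow, intervalIntegral.integral_const_mul, integral_pow]
  ring

lemma abs_sub_radialMean_le {b : ℝ → ℝ} (hg : ContinuousOn g (Icc 0 R)) (hr : r ∈ Icc 0 R)
    (hb : Continuous b) (hle : ∀ t ∈ Icc (0 : ℝ) 1, |g r - g (r * t)| ≤ b t) :
    |g r - radialMean g r| ≤ ∫ t in (0 : ℝ)..1, b t := by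
  have hdiff : g r - radialMean g r = ∫ t in (0 : ℝ)..1, (g r - g (r * t)) := by
    rw [intervalIntegral.integral_sub (by simp) (intervalIntegrable_comp_mul_left hg hr)]
    simp [radialMean]
  rw [hdiff, ← Real.norm_eq_abs]
  exact intervalIntegral.norm_integral_le_of_norm_le zero_le_one
    (.of_forall fun t ht => hle t (Ioc_subset_Icc_self ht)) (hb.intervalIntegrable 0 1)

lemma continuousOn_radialMean (hg : ContinuousOn g (Icc 0 R)) :
    ContinuousOn (radialMean g) (Icc 0 R) := by
  intro r₀ hr₀
  have hR : 0 ≤ R := hr₀.1.trans hr₀.2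
  have hcont : Continuous (IccExtend hR ((Icc 0 R).domRestrict g)) := hg.domRestrict.Icc_extend'
  have hmean : Continuous (radialMean (IccExtend hR ((Icc 0 R).domRestrict g))) :=
    intervalIntegral.continuous_parametric_intervalIntegral_of_continuous'
      (f := fun r t => IccExtend hR ((Icc 0 R).domRestrict g) (r * t)) (by fun_prop) 0 1
  refine hmean.continuousOn.congr (fun r hr => ?_) r₀ hr₀
  refine intervalIntegral.integral_congr fun t ht => ?_
  rw [uIcc_of_le zero_le_one] at ht
  exact (IccExtend_of_mem hR ((Icc 0 R).domRestrict g) (mul_mem_Icc_zero hr ht)).symm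

lemma hasDerivAt_integral_of_continuousOn_Icc {a b x : ℝ} (hg : ContinuousOn g (Icc a b))
    (hx : x ∈ Ioo a b) : HasDerivAt (fun r => ∫ s in a..r, g s) (g x) x := by
  refine intervalIntegral.integral_hasDerivAt_right ?_ ?_ (hg.continuousAt (Icc_mem_nhds hx.1 hx.2))
  · exact (hg.mono (Icc_subset_Icc_right hx.2.le)).intervalIntegrable_of_Icc hx.1.le
  · exact (hg.mono Ioo_subset_Icc_self).stronglyMeasurableAtFilter isOpen_Ioo x hx

/-- The derivative of the radial mean away from the center, with junk value `0` there. -/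
def radialMeanDeriv (g : ℝ → ℝ) (r : ℝ) : ℝ := (g r - radialMean g r) / r

lemma hasDerivAt_radialMean (hg : ContinuousOn g (Icc 0 R)) (hr : r ∈ Ioo 0 R) :
    HasDerivAt (radialMean g) (radialMeanDeriv g r) r := by
  have hr0 : r ≠ 0 := hr.1.ne'
  have hquot := (hasDerivAt_inv hr0).mul (hasDerivAt_integral_of_continuousOn_Icc hg hr)
  refine (hquot.congr_of_eventuallyEq ?_).congr_deriv ?_
  · filter_upwards [lt_mem_nhds hr.1] with s hs using radialMean_of_ne_zero hs.ne'
  · rw [radialMeanDeriv, radialMean_of_ne_zero hr0]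
    field_simp
    ring

/-- The junk value `g 0 / 0 = 0` is the limit at the center when `g` vanishes to second order. -/
lemma continuousOn_div_self_of_abs_le {C : ℝ} (hg : ContinuousOn g (Icc 0 R))
    (hle : ∀ r ∈ Icc 0 R, |g r / r| ≤ C * r) : ContinuousOn (fun r => g r / r) (Icc 0 R) := by
  intro r hr
  rcases eq_or_ne r 0 with rfl | hr0
  · rw [ContinuousWithinAt, div_zero]
    refine squeeze_zero_norm' (a := fun r => C * r) ?_ ?_
    · filter_upwards [self_mem_nhdsWithin] with s hs using hle s hs
    · have hlin : Continuous fun r => C * r := by fun_prop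
      simpa using (hlin.tendsto 0).mono_left nhdsWithin_le_nhds
  · exact (hg r hr).div continuousWithinAt_id hr0

end RadialMean

section MaximumPrinciple

lemma sub_mul_deriv_nonpos_of_isMaxOn {z : ℝ → ℝ} {s : Set ℝ} {d p x : ℝ} (hs : Convex ℝ s)
    (hmax : IsMaxOn z s p) (hd : HasDerivWithinAt z d s p) (hp : p ∈ s) (hx : x ∈ s) :
    (x - p) * d ≤ 0 := by
  simpa using hmax.localize.hasFDerivWithinAt_nonpos hd.hasFDerivWithinAt
    (sub_mem_posTangentConeAt_of_segment_subset (hs.segment_subset hp hx))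

lemma mul_deriv_nonpos_of_isMaxOn {V z : ℝ → ℝ} {a b d p : ℝ} (hV : V b ≤ 0) (hap : a < p)
    (hpb : p ≤ b) (hd : HasDerivWithinAt z d (Icc a b) p) (hmax : IsMaxOn z (Icc a b) p) :
    V p * d ≤ 0 := by
  have hfermat := fun {x} => sub_mul_deriv_nonpos_of_isMaxOn (x := x) (convex_Icc a b) hmax hd
    ⟨hap.le, hpb⟩
  have hd0 : 0 ≤ d := nonneg_of_mul_nonpos_right (hfermat ⟨le_rfl, hap.le.trans hpb⟩)
    (sub_neg.2 hap)
  rcases hpb.eq_or_lt with rfl | hpb'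
  · exact mul_nonpos_of_nonpos_of_nonneg hV hd0
  · have hd1 : d ≤ 0 := nonpos_of_mul_nonpos_right (hfermat ⟨hap.le.trans hpb, le_rfl⟩)
      (sub_pos.2 hpb')
    rw [le_antisymm hd1 hd0, mul_zero]

lemma mul_deriv_nonneg_of_isMinOn {V z : ℝ → ℝ} {a b d q : ℝ} (hV : 0 ≤ V a) (haq : a ≤ q)
    (hqb : q < b) (hd : HasDerivWithinAt z d (Icc a b) q) (hmin : IsMinOn z (Icc a b) q) :
    0 ≤ V q * d := by
  have hfermat := fun {x} => sub_mul_deriv_nonpos_of_isMaxOn (x := x) (convex_Icc a b) hmin.neg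
    hd.neg ⟨haq, hqb.le⟩
  have hd0 : -d ≤ 0 := nonpos_of_mul_nonpos_right (hfermat ⟨haq.trans hqb.le, le_rfl⟩)
    (sub_pos.2 hqb)
  rcases haq.eq_or_lt with rfl | haq'
  · exact mul_nonneg hV (neg_nonpos.1 hd0)
  · have hd1 : 0 ≤ -d := nonneg_of_mul_nonpos_right (hfermat ⟨le_rfl, haq.trans hqb.le⟩)
      (sub_neg.2 haq')
    rw [neg_eq_zero.1 (le_antisymm hd0 hd1), mul_zero]

lemma exists_first_nonneg {X : Type*} [TopologicalSpace X] [T2Space X] {K : Set X} {T : ℝ}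
    {Φ : ℝ → X → ℝ} (hK : IsCompact K) (hΦ : ContinuousOn Φ.uncurry (Icc 0 T ×ˢ K))
    (hex : ∃ u ∈ Icc 0 T, ∃ x ∈ K, 0 ≤ Φ u x) :
    ∃ u ∈ Icc 0 T, (∃ x ∈ K, 0 ≤ Φ u x) ∧ ∀ u' ∈ Ico 0 u, ∀ x ∈ K, Φ u' x < 0 := by
  have hB : IsCompact (Icc 0 T ×ˢ K) := isCompact_Icc.prod hK
  have hS : IsCompact (Icc 0 T ×ˢ K ∩ Φ.uncurry ⁻¹' Ici 0) :=
    hB.of_isClosed_subset (hΦ.preimage_isClosed_of_isClosed hB.isClosed isClosed_Ici)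
      inter_subset_left
  obtain ⟨u₀, hu₀, x₀, hx₀, h₀⟩ := hex
  obtain ⟨⟨u, x⟩, ⟨⟨hu, hx⟩, hux⟩, hmin⟩ := hS.exists_isMinOn (f := Prod.fst)
    ⟨(u₀, x₀), ⟨hu₀, hx₀⟩, h₀⟩ continuous_fst.continuousOn
  refine ⟨u, hu, ⟨x, hx, hux⟩, fun u' hu' y hy => ?_⟩
  by_contra! hge
  have hle : u ≤ u' := hmin (a := (u', y)) ⟨⟨⟨hu'.1, hu'.2.le.trans hu.2⟩, hy⟩, hge⟩
  exact hu'.2.not_ge hle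

theorem neg_of_deriv_neg_at_zero_max {X : Type*} [TopologicalSpace X] [T2Space X] {K : Set X}
    {T : ℝ} {Φ Φ' : ℝ → X → ℝ} (hK : IsCompact K) (hΦ : ContinuousOn Φ.uncurry (Icc 0 T ×ˢ K))
    (hd : ∀ u ∈ Icc 0 T, ∀ x ∈ K, HasDerivWithinAt (fun u' => Φ u' x) (Φ' u x) (Icc 0 T) u)
    (hinit : ∀ x ∈ K, Φ 0 x < 0)
    (hneg : ∀ u ∈ Icc 0 T, ∀ x ∈ K, Φ u x = 0 → (∀ y ∈ K, Φ u y ≤ 0) → Φ' u x < 0) :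
    ∀ u ∈ Icc 0 T, ∀ x ∈ K, Φ u x < 0 := by
  by_contra! hex
  obtain ⟨u, hu, ⟨x, hx, hux⟩, hbefore⟩ := exists_first_nonneg hK hΦ hex
  have hu0 : 0 < u := hu.1.lt_of_ne fun h => (hinit x hx).not_ge (h ▸ hux)
  have hsub : Icc 0 u ⊆ Icc 0 T := Icc_subset_Icc_right hu.2
  have hle : ∀ y ∈ K, Φ u y ≤ 0 := fun y hy => by
    have hcont : ContinuousOn (fun u' => Φ u' y) (Icc 0 u) := fun u' hu' =>
      ((hd u' (hsub hu') y hy).mono hsub).continuousWithinAt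
    rw [← closure_Ico hu0.ne] at hcont
    refine le_on_closure (fun u' hu' => (hbefore u' hu' y hy).le) hcont continuousOn_const ?_
    rw [closure_Ico hu0.ne]
    exact right_mem_Icc.2 hu0.le
  have hzero : Φ u x = 0 := (hle x hx).antisymm hux
  have hmax : IsMaxOn (fun u' => Φ u' x) (Icc 0 u) u := fun u' hu' => by
    rcases hu'.2.eq_or_lt with heq | hlt
    · simp only [heq, mem_ofPred_eq, le_refl]
    · exact (hbefore u' ⟨hu'.1, hlt⟩ x hx).le.trans hux
  have hslope := sub_mul_deriv_nonpos_of_isMaxOn (convex_Icc 0 u) hmax ((hd u hu x hx).mono hsub)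
    (right_mem_Icc.2 hu.1) (left_mem_Icc.2 hu.1)
  nlinarith [hneg u hu x hx hzero hle]

end MaximumPrinciple

section TransportOperator

/-- The spatial part `V ∂_r v + V' (v - v̄)` of the equation, with `v'` standing for `∂_r v`. For
`V = f̃` and `V' = 2G` it is the right-hand side of `2 ∂_u h = f̃ ∂_r h + 2G (h - h̄)`. -/
def transportOp (V V' v v' : ℝ → ℝ) (r : ℝ) : ℝ :=
  V r * v' r + V' r * (v r - radialMean v r)

lemma transportOp_neg (V V' v v' : ℝ → ℝ) (r : ℝ) :
    transportOp V V' (-v) (-v') r = -transportOp V V' v v' r := by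
  simp only [transportOp, radialMean_neg, Pi.neg_apply]
  ring

/-- The properties of the radial speed `V = f̃` of a nearly de Sitter background, with derivative
`V' = 2G`, that make the transport equation dissipative: `V` is concave, the
characteristics leave `[0, R]` through both ends, and `damping` bounds the part free of `V''` in the
derivative of the flux `V ψ' + V' (ψ + K - v̄)`, where `ψ' = 2 - r / R`.
The tolerance `δ` bounds `V'' - V' / r`, which vanishes for the de Sitter speed `1 - Λ r² / 3`. -/
structure IsDampedSpeed (R δ : ℝ) (V V' : ℝ → ℝ) : Prop where
  continuousOn : ContinuousOn V (Icc 0 R)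
  continuousOn_deriv : ContinuousOn V' (Icc 0 R)
  hasDerivAt : ∀ r ∈ Ioo 0 R, HasDerivAt V (V' r) r
  second_deriv : ∀ r ∈ Ioo 0 R, ∃ V'', HasDerivAt V' V'' r ∧ V'' ≤ 0 ∧ |V'' - V' r / r| ≤ δ
  deriv_nonpos : ∀ r ∈ Icc 0 R, V' r ≤ 0
  zero_nonneg : 0 ≤ V 0
  right_nonpos : V R ≤ 0
  damping : ∀ r ∈ Ioo 0 R, 2 * V' r * (2 - r / R) - V r / R ≤ -1 / R

lemma IsDampedSpeed.nonneg {R δ : ℝ} {V V' : ℝ → ℝ} (hV : IsDampedSpeed R δ V V')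
    (hR : 0 < R) : 0 ≤ δ :=
  have ⟨_, _, _, hdefect⟩ := hV.second_deriv (R / 2) ⟨half_pos hR, half_lt_self hR⟩
  (abs_nonneg _).trans hdefect

end TransportOperator

section DecayWeight

/-- The weight `ψ` measuring the separation of two radii in the two-point estimate. Its derivative
`2 - r / R` stays in `[1, 2]`, so `|ψ s - ψ t|` is comparable to `|s - t|`, and its concavity damps
the difference of two values near the center, where `G` vanishes. -/
def decayWeight (R r : ℝ) : ℝ := 2 * r - r ^ 2 / (2 * R)

variable {R s t : ℝ}

lemma decayWeight_sub (R s t : ℝ) :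
    decayWeight R s - decayWeight R t = (s - t) * (2 - (s + t) / (2 * R)) := by
  simp only [decayWeight]
  ring

lemma hasDerivAt_decayWeight (R r : ℝ) : HasDerivAt (decayWeight R) (2 - r / R) r := by
  have hd := ((hasDerivAt_id r).const_mul 2).sub ((hasDerivAt_pow 2 r).div_const (2 * R))
  exact hd.congr_deriv (by norm_num; ring)

lemma one_le_decayWeight_slope (hs : s ∈ Icc 0 R) (ht : t ∈ Icc 0 R) :
    1 ≤ 2 - (s + t) / (2 * R) := by
  have hR : 0 ≤ R := hs.1.trans hs.2
  have hquot : (s + t) / (2 * R) ≤ 1 :=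
    div_le_one_of_le₀ (by linarith [hs.2, ht.2]) (by positivity)
  linarith

lemma strictMonoOn_decayWeight (R : ℝ) : StrictMonoOn (decayWeight R) (Icc 0 R) := by
  intro s hs t ht hst
  rw [← sub_pos, decayWeight_sub]
  exact mul_pos (sub_pos.2 hst) (one_pos.trans_le (one_le_decayWeight_slope ht hs))

lemma abs_sub_le_abs_decayWeight_sub (hs : s ∈ Icc 0 R) (ht : t ∈ Icc 0 R) :
    |s - t| ≤ |decayWeight R s - decayWeight R t| := by
  rw [decayWeight_sub, abs_mul]
  exact le_mul_of_one_le_right (abs_nonneg _)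
    ((one_le_decayWeight_slope hs ht).trans (le_abs_self _))

lemma abs_decayWeight_sub_le (hs : s ∈ Icc 0 R) (ht : t ∈ Icc 0 R) :
    |decayWeight R s - decayWeight R t| ≤ 2 * |s - t| := by
  have hquot : 0 ≤ (s + t) / (2 * R) :=
    div_nonneg (add_nonneg hs.1 ht.1) (by linarith [hs.1, hs.2])
  rw [decayWeight_sub, abs_mul, mul_comm,
    abs_of_nonneg (one_pos.le.trans (one_le_decayWeight_slope hs ht))]
  exact mul_le_mul_of_nonneg_right (by linarith) (abs_nonneg _)

end DecayWeight

section TwoPointDamping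

variable {R δ A K η p q r : ℝ} {V V' v v' : ℝ → ℝ}

lemma abs_sub_radialMean_le_of_decayWeight (hA : 0 ≤ A) (hv : ContinuousOn v (Icc 0 R))
    (hosc : ∀ s ∈ Icc 0 R, ∀ t ∈ Icc 0 R,
      |v s - v t| ≤ A * |decayWeight R s - decayWeight R t| + η)
    (hr : r ∈ Icc 0 R) : |v r - radialMean v r| ≤ 2 * A * R + η := by
  refine (abs_sub_radialMean_le hv hr continuous_const (b := fun _ => 2 * A * R + η) ?_).trans_eq
    (by simp)
  intro t ht
  have hrt := mul_mem_Icc_zero hr ht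
  have hdist : |r - r * t| ≤ R := abs_sub_le_of_nonneg_of_le hr.1 hr.2 hrt.1 hrt.2
  calc |v r - v (r * t)| ≤ A * |decayWeight R r - decayWeight R (r * t)| + η := hosc r hr _ hrt
    _ ≤ A * (2 * R) + η := by gcongr; linarith [abs_decayWeight_sub_le hr hrt]
    _ = 2 * A * R + η := by ring

/-- The transport operator evaluated at the barrier `A ψ + K`, where `ψ` is the decay weight,
except that the mean is taken of `v`. -/
def barrierFlux (R A K : ℝ) (V V' v : ℝ → ℝ) (r : ℝ) : ℝ :=
  V r * (A * (2 - r / R)) + V' r * (A * decayWeight R r + K - radialMean v r)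

lemma IsDampedSpeed.hasDerivAt_barrierFlux_le (hV : IsDampedSpeed R δ V V') (hA : 0 ≤ A)
    (hδ : 4 * δ * R ^ 2 ≤ 1) (hv : ContinuousOn v (Icc 0 R))
    (hosc : ∀ s ∈ Icc 0 R, ∀ t ∈ Icc 0 R,
      |v s - v t| ≤ A * |decayWeight R s - decayWeight R t| + η)
    (hr : r ∈ Ioo 0 R) (hbarrier : v r ≤ A * decayWeight R r + K) :
    ∃ d, HasDerivAt (barrierFlux R A K V V' v) d r ∧
      d ≤ δ * η - A / (4 * R) * (2 - r / R) := by
  obtain ⟨V'', hV'', hconcave, hdefect⟩ := hV.second_deriv r hr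
  have hR : 0 < R := hr.1.trans hr.2
  have hφ : HasDerivAt (fun s : ℝ => A * (2 - s / R)) (-A / R) r :=
    (((hasDerivAt_id r).div_const R).const_sub 2 |>.const_mul A).congr_deriv (by ring)
  have hgap := (((hasDerivAt_decayWeight R r).const_mul A).add_const K).sub
    (hasDerivAt_radialMean hv hr)
  refine ⟨_, ((hV.hasDerivAt r hr).mul hφ).add (hV''.mul hgap), ?_⟩
  have hmean : (V'' - V' r / r) * (v r - radialMean v r) ≤ δ * (2 * A * R + η) :=
    (le_abs_self _).trans <| (abs_mul _ _).trans_le <| mul_le_mul hdefect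
      (abs_sub_radialMean_le_of_decayWeight hA hv hosc (Ioo_subset_Icc_self hr)) (abs_nonneg _)
      ((abs_nonneg _).trans hdefect)
  have hweight : A * (2 * V' r * (2 - r / R) - V r / R) ≤ A * (-1 / R) :=
    mul_le_mul_of_nonneg_left (hV.damping r hr) hA
  -- Splitting `A ψ + K - v̄` at `v` leaves `V'' ≤ 0` in front of the height of the barrier above
  -- `v`, and the defect `V'' - V' / r` in front of `v - v̄`.
  have hdrop : V'' * (A * decayWeight R r + K - v r) ≤ 0 :=
    mul_nonpos_of_nonpos_of_nonneg hconcave (sub_nonneg.2 hbarrier)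
  have hsmall : δ * (2 * A * R) ≤ A / (2 * R) := by
    rw [le_div_iff₀ (by positivity)]
    nlinarith
  have hrate : 0 ≤ A / (4 * R) * (r / R) := by have := hr.1; positivity
  calc _ = A * (2 * V' r * (2 - r / R) - V r / R) + V'' * (A * decayWeight R r + K - v r)
        + (V'' - V' r / r) * (v r - radialMean v r) := by rw [radialMeanDeriv]; ring
    _ ≤ A * (-1 / R) + 0 + δ * (2 * A * R + η) := by gcongr
    _ ≤ A * (-1 / R) + A / (2 * R) + δ * η := by linarith
    _ = δ * η - A / (4 * R) * 2 := by field_simp; ring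
    _ ≤ δ * η - A / (4 * R) * (2 - r / R) := by linarith

lemma IsDampedSpeed.barrierFlux_sub_le (hV : IsDampedSpeed R δ V V') (hA : 0 ≤ A)
    (hδ : 4 * δ * R ^ 2 ≤ 1) (hv : ContinuousOn v (Icc 0 R))
    (hosc : ∀ s ∈ Icc 0 R, ∀ t ∈ Icc 0 R,
      |v s - v t| ≤ A * |decayWeight R s - decayWeight R t| + η)
    (hq : 0 ≤ q) (hqp : q ≤ p) (hp : p ≤ R)
    (hbarrier : ∀ s ∈ Ioo q p, v s ≤ A * decayWeight R s + K) :
    barrierFlux R A K V V' v p - barrierFlux R A K V V' v q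
      ≤ δ * η * (p - q) - A / (4 * R) * (decayWeight R p - decayWeight R q) := by
  have hψ (s : ℝ) := hasDerivAt_decayWeight R s
  have hsub : Icc q p ⊆ Icc 0 R := Icc_subset_Icc hq hp
  choose! d hd hdle using fun s (hs : s ∈ Ioo q p) => hV.hasDerivAt_barrierFlux_le hA hδ hv hosc
    (Ioo_subset_Ioo hq hp hs) (hbarrier s hs)
  have hcont : ContinuousOn (barrierFlux R A K V V' v) (Icc q p) := by
    have hψc : Continuous (decayWeight R) :=
      continuous_iff_continuousAt.2 fun s => (hψ s).continuousAt
    refine ContinuousOn.mono ?_ hsub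
    have := hV.continuousOn
    have := hV.continuousOn_deriv
    have := continuousOn_radialMean hv
    unfold barrierFlux
    fun_prop
  have hcomp (s : ℝ) : HasDerivAt (fun s => δ * η * s - A / (4 * R) * decayWeight R s)
      (δ * η - A / (4 * R) * (2 - s / R)) s :=
    (((hasDerivAt_id s).const_mul _).sub ((hψ s).const_mul _)).congr_deriv (by simp)
  have hanti : AntitoneOn (fun s => barrierFlux R A K V V' v s
      - (δ * η * s - A / (4 * R) * decayWeight R s)) (Icc q p) := by
    refine antitoneOn_of_hasDerivWithinAt_nonpos (convex_Icc q p)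
      (hcont.sub fun s _ => (hcomp s).continuousAt.continuousWithinAt)
      (f' := fun s => d s - (δ * η - A / (4 * R) * (2 - s / R))) ?_ ?_ <;> rw [interior_Icc]
    · exact fun s hs => ((hd s hs).sub (hcomp s)).hasDerivWithinAt
    · exact fun s hs => sub_nonpos.2 (hdle s hs)
  linarith [hanti (left_mem_Icc.2 hqp) (right_mem_Icc.2 hqp) hqp]

lemma transportOp_le_barrierFlux (hR : V R ≤ 0) (hq : 0 ≤ q) (hqp : q < p) (hp : p ≤ R)
    (hv' : HasDerivWithinAt v (v' p) (Icc 0 R) p)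
    (hmax : IsMaxOn (fun s => v s - A * decayWeight R s) (Icc q R) p) :
    transportOp V V' v v' p ≤ barrierFlux R A (v p - A * decayWeight R p) V V' v p := by
  have hd := (hv'.mono (Icc_subset_Icc_left hq)).sub
    ((hasDerivAt_decayWeight R p).const_mul A).hasDerivWithinAt
  have hflux := mul_deriv_nonpos_of_isMaxOn hR hqp hp hd hmax
  simp only [transportOp, barrierFlux]
  linarith

lemma barrierFlux_le_transportOp (h0 : 0 ≤ V 0) (hq : 0 ≤ q) (hqp : q < p) (hp : p ≤ R)
    (hV' : V' q ≤ 0) (hη : 0 ≤ η) (hv' : HasDerivWithinAt v (v' q) (Icc 0 R) q)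
    (hmin : IsMinOn (fun s => v s - A * decayWeight R s) (Icc 0 p) q) :
    barrierFlux R A (v q + η - A * decayWeight R q) V V' v q ≤ transportOp V V' v v' q := by
  have hd := (hv'.mono (Icc_subset_Icc_right hp)).sub
    ((hasDerivAt_decayWeight R q).const_mul A).hasDerivWithinAt
  have hflux := mul_deriv_nonneg_of_isMinOn h0 hq hqp hd hmin
  have hslack := mul_nonpos_of_nonpos_of_nonneg hV' hη
  simp only [transportOp, barrierFlux]
  linarith

theorem IsDampedSpeed.transportOp_sub_le_of_lt (hV : IsDampedSpeed R δ V V') (hA : 0 ≤ A)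
    (hη : 0 ≤ η) (hδ : 4 * δ * R ^ 2 ≤ 1)
    (hv' : ∀ s ∈ Icc 0 R, HasDerivWithinAt v (v' s) (Icc 0 R) s)
    (hosc : ∀ s ∈ Icc 0 R, ∀ t ∈ Icc 0 R,
      |v s - v t| ≤ A * |decayWeight R s - decayWeight R t| + η)
    (hp : p ∈ Icc 0 R) (hq : q ∈ Icc 0 R) (hqp : q < p)
    (htouch : v p - v q = A * (decayWeight R p - decayWeight R q) + η) :
    transportOp V V' v v' p - transportOp V V' v v' q
      ≤ δ * η * (p - q) - A / (4 * R) * (decayWeight R p - decayWeight R q) := by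
  have hmono := (strictMonoOn_decayWeight R).monotoneOn
  have hv : ContinuousOn v (Icc 0 R) := fun s hs => (hv' s hs).continuousWithinAt
  have hup {s t} (hs : s ∈ Icc 0 R) (ht : t ∈ Icc 0 R) (hst : s ≤ t) :
      v t - v s ≤ A * (decayWeight R t - decayWeight R s) + η := by
    have := (le_abs_self _).trans (hosc t ht s hs)
    rwa [abs_of_nonneg (sub_nonneg.2 (hmono hs ht hst))] at this
  have hmax : IsMaxOn (fun s => v s - A * decayWeight R s) (Icc q R) p := fun s hs => by
    have := hup hq ⟨hq.1.trans hs.1, hs.2⟩ hs.1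
    change v s - A * decayWeight R s ≤ v p - A * decayWeight R p
    linarith
  have hmin : IsMinOn (fun s => v s - A * decayWeight R s) (Icc 0 p) q := fun s hs => by
    have := hup ⟨hs.1, hs.2.trans hp.2⟩ hp hs.2
    change v q - A * decayWeight R q ≤ v s - A * decayWeight R s
    linarith
  have hK : v q + η - A * decayWeight R q = v p - A * decayWeight R p := by linarith
  have hle := transportOp_le_barrierFlux hV.right_nonpos hq.1 hqp hp.2 (hv' p hp) hmax (V' := V')
  have hge := barrierFlux_le_transportOp hV.zero_nonneg hq.1 hqp hp.2 (hV.deriv_nonpos q hq) hη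
    (hv' q hq) hmin
  rw [hK] at hge
  have hbarrier : ∀ s ∈ Ioo q p, v s ≤ A * decayWeight R s + (v p - A * decayWeight R p) :=
    fun s hs => by
      have : v s - A * decayWeight R s ≤ v p - A * decayWeight R p :=
        hmax ⟨hs.1.le, hs.2.le.trans hp.2⟩
      linarith
  linarith [hV.barrierFlux_sub_le hA hδ hv hosc hq.1 hqp.le hp.2 hbarrier]

theorem IsDampedSpeed.transportOp_sub_le (hV : IsDampedSpeed R δ V V') (hA : 0 ≤ A)
    (hη : 0 ≤ η) (hδ : 4 * δ * R ^ 2 ≤ 1)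
    (hv' : ∀ s ∈ Icc 0 R, HasDerivWithinAt v (v' s) (Icc 0 R) s)
    (hosc : ∀ s ∈ Icc 0 R, ∀ t ∈ Icc 0 R,
      |v s - v t| ≤ A * |decayWeight R s - decayWeight R t| + η)
    (hp : p ∈ Icc 0 R) (hq : q ∈ Icc 0 R) (hpq : p ≠ q)
    (htouch : v p - v q = A * |decayWeight R p - decayWeight R q| + η) :
    transportOp V V' v v' p - transportOp V V' v v' q
      ≤ δ * η * |p - q| - A / (4 * R) * |decayWeight R p - decayWeight R q| := by
  rcases hpq.lt_or_gt with hlt | hlt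
  · have hψ := sub_neg.2 (strictMonoOn_decayWeight R hp hq hlt)
    rw [abs_of_neg hψ] at htouch ⊢
    have hneg := hV.transportOp_sub_le_of_lt (v := -v) (v' := -v') hA hη hδ
      (fun s hs => (hv' s hs).neg)
      (fun s hs t ht => by simpa [neg_add_eq_sub, abs_sub_comm] using hosc s hs t ht)
      hq hp hlt (by simp only [Pi.neg_apply]; linarith)
    simp only [transportOp_neg] at hneg
    rw [abs_of_neg (sub_neg.2 hlt)]
    linarith
  · have hψ := sub_pos.2 (strictMonoOn_decayWeight R hq hp hlt)
    rw [abs_of_pos hψ] at htouch ⊢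
    rw [abs_of_pos (sub_pos.2 hlt)]
    exact hV.transportOp_sub_le_of_lt hA hη hδ hv' hosc hp hq hlt htouch

end TwoPointDamping

section DampedEvolution

lemma norm_le_of_hasDerivWithinAt_of_lipschitz {F : Type*} [NormedAddCommGroup F]
    [NormedSpace ℝ F] {g : ℝ → F} {d : F} {s : Set ℝ} {C r : ℝ} (hs : UniqueDiffWithinAt ℝ s r)
    (hd : HasDerivWithinAt g d s r) (hlip : ∀ t ∈ s, ‖g t - g r‖ ≤ C * |t - r|) : ‖d‖ ≤ C := by
  have : (𝓝[s \ {r}] r).NeBot := accPt_principal_iff_nhdsWithin.1 hs.accPt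
  refine le_of_tendsto (hasDerivWithinAt_iff_tendsto_slope.1 hd).norm ?_
  filter_upwards [self_mem_nhdsWithin] with t ht
  have hpos : 0 < |t - r| := abs_pos.2 (sub_ne_zero.2 ht.2)
  rw [slope, vsub_eq_sub, norm_smul, norm_inv, Real.norm_eq_abs, inv_mul_le_iff₀ hpos, mul_comm]
  exact hlip t ht.1

lemma continuousOn_two_point_gap {v : ℝ → ℝ → ℝ} {a b : ℝ → ℝ} {I : Set ℝ} {R : ℝ}
    (hv : ContinuousOn v.uncurry (I ×ˢ Icc 0 R)) (ha : Continuous a) (hb : Continuous b) :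
    ContinuousOn (Function.uncurry fun u (z : ℝ × ℝ) =>
      v u z.1 - v u z.2 - (a u * |decayWeight R z.1 - decayWeight R z.2| + b u))
      (I ×ˢ (Icc 0 R ×ˢ Icc 0 R)) := by
  have hfst : ContinuousOn (fun w : ℝ × ℝ × ℝ => v w.1 w.2.1) (I ×ˢ (Icc 0 R ×ˢ Icc 0 R)) :=
    hv.comp (f := fun w : ℝ × ℝ × ℝ => (w.1, w.2.1)) (by fun_prop) fun w hw => ⟨hw.1, hw.2.1⟩
  have hsnd : ContinuousOn (fun w : ℝ × ℝ × ℝ => v w.1 w.2.2) (I ×ˢ (Icc 0 R ×ˢ Icc 0 R)) :=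
    hv.comp (f := fun w : ℝ × ℝ × ℝ => (w.1, w.2.2)) (by fun_prop) fun w hw => ⟨hw.1, hw.2.2⟩
  refine (hfst.sub hsnd).sub (Continuous.continuousOn ?_)
  simp only [decayWeight]
  fun_prop

/-- `v` solves `2 ∂_u v = V ∂_r v + V' (v - v̄)` on `[0, ∞) × [0, R]` with damped speeds `V u`; the
functions `vu` and `vr` are the partial derivatives of `v`. -/
structure IsDampedEvolution (R δ : ℝ) (v vu vr V V' : ℝ → ℝ → ℝ) : Prop where
  continuousOn : ContinuousOn v.uncurry (Ici 0 ×ˢ Icc 0 R)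
  hasDerivWithinAt_time : ∀ u ∈ Ici 0, ∀ r ∈ Icc 0 R,
    HasDerivWithinAt (fun u' => v u' r) (vu u r) (Ici 0) u
  hasDerivWithinAt_radius : ∀ u ∈ Ici 0, ∀ r ∈ Icc 0 R,
    HasDerivWithinAt (v u) (vr u r) (Icc 0 R) r
  isDampedSpeed : ∀ u ∈ Ici 0, IsDampedSpeed R δ (V u) (V' u)
  equation : ∀ u ∈ Ici 0, ∀ r ∈ Icc 0 R,
    2 * vu u r = transportOp (V u) (V' u) (v u) (vr u) r

namespace IsDampedEvolution

variable {R δ : ℝ} {v vu vr V V' : ℝ → ℝ → ℝ}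

lemma sub_deriv_lt_of_touch (hv : IsDampedEvolution R δ v vu vr V V')
    (hδ : 4 * δ * R ^ 2 ≤ 1) {A η u p q : ℝ} (hA : 0 ≤ A) (hη : 0 < η) (hu : 0 ≤ u)
    (hp : p ∈ Icc 0 R) (hq : q ∈ Icc 0 R)
    (htouch : v u p - v u q = A * |decayWeight R p - decayWeight R q| + η)
    (hosc : ∀ s ∈ Icc 0 R, ∀ t ∈ Icc 0 R,
      v u s - v u t ≤ A * |decayWeight R s - decayWeight R t| + η) :
    vu u p - vu u q
      < η * (δ * R + 1) - A / (8 * R) * |decayWeight R p - decayWeight R q| := by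
  have hpq : p ≠ q := by
    rintro rfl
    simp only [sub_self, abs_zero, mul_zero, zero_add] at htouch
    exact hη.ne htouch
  have hdist : |p - q| ≤ R := abs_sub_le_of_nonneg_of_le hp.1 hp.2 hq.1 hq.2
  have hdamp := (hv.isDampedSpeed u hu).transportOp_sub_le hA hη.le hδ
    (hv.hasDerivWithinAt_radius u hu) (fun s hs t ht => abs_sub_le_iff.2 ⟨hosc s hs t ht, by
      simpa only [abs_sub_comm] using hosc t ht s hs⟩) hp hq hpq htouch
  rw [← hv.equation u hu p hp, ← hv.equation u hu q hq] at hdamp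
  have hR : 0 < R := (abs_pos.2 (sub_ne_zero.2 hpq)).trans_le hdist
  have hslack : δ * η * |p - q| ≤ 2 * (δ * η * R) := by
    have hδη : 0 ≤ δ * η := mul_nonneg ((hv.isDampedSpeed u hu).nonneg hR) hη.le
    linarith [mul_le_mul_of_nonneg_left hdist hδη, mul_nonneg hδη hR.le]
  have hhalf : A / (8 * R) = A / (4 * R) / 2 := by ring
  rw [hhalf]
  linarith

lemma sub_lt_add (hv : IsDampedEvolution R δ v vu vr V V')
    (hδ : 4 * δ * R ^ 2 ≤ 1) {A η : ℝ} (hA : 0 ≤ A) (hη : 0 < η)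
    (hinit : ∀ x ∈ Icc 0 R, ∀ y ∈ Icc 0 R,
      v 0 x - v 0 y ≤ A * |decayWeight R x - decayWeight R y|)
    {T x y : ℝ} (hT : 0 ≤ T) (hx : x ∈ Icc 0 R) (hy : y ∈ Icc 0 R) :
    v T x - v T y < A * exp (-(T / (8 * R))) * |decayWeight R x - decayWeight R y|
      + η * exp ((δ * R + 1) * T) := by
  let a (u : ℝ) := A * exp (-(u / (8 * R)))
  let b (u : ℝ) := η * exp ((δ * R + 1) * u)
  have ha (u : ℝ) : HasDerivAt a (-(a u / (8 * R))) u :=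
    (((hasDerivAt_id u).div_const (8 * R)).neg.exp.const_mul A).congr_deriv (by simp [a]; ring)
  have hb (u : ℝ) : HasDerivAt b (b u * (δ * R + 1)) u :=
    (((hasDerivAt_id u).const_mul (δ * R + 1)).exp.const_mul η).congr_deriv (by simp [b]; ring)
  -- The slack `b u > 0` keeps the touching points off the diagonal `z.1 = z.2`.
  have hneg := neg_of_deriv_neg_at_zero_max (isCompact_Icc.prod isCompact_Icc)
    (continuousOn_two_point_gap (hv.continuousOn.mono (prod_mono_left Icc_subset_Ici_self))
      (a := a) (b := b) (by fun_prop) (by fun_prop))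
    (Φ' := fun u z => vu u z.1 - vu u z.2
      - (-(a u / (8 * R)) * |decayWeight R z.1 - decayWeight R z.2| + b u * (δ * R + 1)))
    ?_ ?_ ?_ T ⟨hT, le_rfl⟩ (x, y) ⟨hx, hy⟩
  · simpa only [sub_neg] using hneg
  · intro u hu z hz
    have hsub : Icc 0 T ⊆ Ici 0 := Icc_subset_Ici_self
    exact (((hv.hasDerivWithinAt_time u hu.1 _ hz.1).mono hsub).sub
      ((hv.hasDerivWithinAt_time u hu.1 _ hz.2).mono hsub)).sub
      (((ha u).mul_const |decayWeight R z.1 - decayWeight R z.2|).add (hb u)).hasDerivWithinAt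
  · intro z hz
    have := hinit _ hz.1 _ hz.2
    simp only [a, b, zero_div, neg_zero, mul_zero, Real.exp_zero, mul_one]
    linarith
  · intro u hu z hz hzero hle
    have := hv.sub_deriv_lt_of_touch hδ (A := a u) (η := b u) (by positivity) (by positivity)
      hu.1 hz.1 hz.2 (sub_eq_zero.1 hzero) fun s hs t ht => sub_nonpos.1 (hle (s, t) ⟨hs, ht⟩)
    linarith

lemma sub_le (hv : IsDampedEvolution R δ v vu vr V V')
    (hδ : 4 * δ * R ^ 2 ≤ 1) {A : ℝ} (hA : 0 ≤ A)
    (hinit : ∀ x ∈ Icc 0 R, ∀ y ∈ Icc 0 R,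
      v 0 x - v 0 y ≤ A * |decayWeight R x - decayWeight R y|)
    {u x y : ℝ} (hu : 0 ≤ u) (hx : x ∈ Icc 0 R) (hy : y ∈ Icc 0 R) :
    v u x - v u y ≤ A * exp (-(u / (8 * R))) * |decayWeight R x - decayWeight R y| := by
  refine le_of_forall_pos_lt_add fun η hη => ?_
  have hlt := hv.sub_lt_add hδ hA (η := η * exp (-((δ * R + 1) * u))) (by positivity) hinit
    hu hx hy
  rwa [mul_assoc η, ← Real.exp_add, neg_add_cancel, Real.exp_zero, mul_one] at hlt

theorem abs_deriv_le (hv : IsDampedEvolution R δ v vu vr V V') (hR : 0 < R)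
    (hδ : 4 * δ * R ^ 2 ≤ 1) {E : ℝ} (hE : ∀ r ∈ Icc 0 R, |vr 0 r| ≤ E)
    {u r : ℝ} (hu : 0 ≤ u) (hr : r ∈ Icc 0 R) :
    |vr u r| ≤ 2 * E * exp (-(u / (8 * R))) := by
  have hE0 : 0 ≤ E := (abs_nonneg _).trans (hE r hr)
  have hinit : ∀ x ∈ Icc 0 R, ∀ y ∈ Icc 0 R,
      v 0 x - v 0 y ≤ E * |decayWeight R x - decayWeight R y| := fun x hx y hy =>
    calc v 0 x - v 0 y ≤ |v 0 x - v 0 y| := le_abs_self _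
      _ ≤ E * |x - y| := (convex_Icc 0 R).norm_image_sub_le_of_norm_hasDerivWithin_le
          (hv.hasDerivWithinAt_radius 0 self_mem_Ici) hE hy hx
      _ ≤ E * |decayWeight R x - decayWeight R y| := by
          exact mul_le_mul_of_nonneg_left (abs_sub_le_abs_decayWeight_sub hx hy) hE0
  refine norm_le_of_hasDerivWithinAt_of_lipschitz (uniqueDiffOn_Icc hR r hr)
    (hv.hasDerivWithinAt_radius u hu r hr) fun s hs => ?_
  calc |v u s - v u r| ≤ E * exp (-(u / (8 * R))) * |decayWeight R s - decayWeight R r| :=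
        abs_sub_le_iff.2 ⟨hv.sub_le hδ hE0 hinit hu hs hr, by
          rw [abs_sub_comm]; exact hv.sub_le hδ hE0 hinit hu hr hs⟩
    _ ≤ E * exp (-(u / (8 * R))) * (2 * |s - r|) := by
        gcongr; exact abs_decayWeight_sub_le hs hr
    _ = 2 * E * exp (-(u / (8 * R))) * |s - r| := by ring

end IsDampedEvolution

end DampedEvolution

section NearDeSitter

/-- A profile `P` with derivative `P'` close to the de Sitter profile `1 - Λ r²`, whose radial mean
is the de Sitter speed `1 - Λ r² / 3`. -/
structure IsNearDeSitter (Λ R δ : ℝ) (P P' : ℝ → ℝ) : Prop where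
  continuousOn : ContinuousOn P (Icc 0 R)
  zero : P 0 = 1
  hasDerivAt : ∀ r ∈ Ioo 0 R, HasDerivAt P (P' r) r
  abs_deriv_add_le : ∀ r ∈ Ioo 0 R, |P' r + 2 * Λ * r| ≤ δ * r

namespace IsNearDeSitter

variable {Λ R δ r s : ℝ} {P P' : ℝ → ℝ}

lemma nonneg (hP : IsNearDeSitter Λ R δ P P') (hR : 0 < R) : 0 ≤ δ :=
  nonneg_of_mul_nonneg_left ((abs_nonneg _).trans
    (hP.abs_deriv_add_le (R / 2) ⟨half_pos hR, half_lt_self hR⟩)) (half_pos hR)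

lemma abs_sub_le (hP : IsNearDeSitter Λ R δ P P') (hs : 0 ≤ s) (hsr : s ≤ r) (hr : r ≤ R) :
    |P r + Λ * r ^ 2 - (P s + Λ * s ^ 2)| ≤ δ / 2 * (r ^ 2 - s ^ 2) := by
  rcases hsr.eq_or_lt with rfl | hlt
  · simp
  obtain ⟨c, hc, hcauchy⟩ := exists_ratio_hasDerivAt_eq_ratio_slope
    (fun x => P x + Λ * x ^ 2) (fun x => P' x + 2 * Λ * x) hlt
    ((hP.continuousOn.mono (Icc_subset_Icc hs hr)).add (by fun_prop))
    (fun x hx => ((hP.hasDerivAt x (Ioo_subset_Ioo hs hr hx)).add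
      ((hasDerivAt_pow 2 x).const_mul Λ)).congr_deriv (by norm_num; ring))
    (fun x => x ^ 2) (fun x => 2 * x) (by fun_prop)
    (fun x _ => (hasDerivAt_pow 2 x).congr_deriv (by norm_num))
  have hc0 : 0 < 2 * c := by linarith [hc.1]
  have hsq : 0 ≤ r ^ 2 - s ^ 2 := sub_nonneg.2 (pow_le_pow_left₀ hs hsr 2)
  refine le_of_mul_le_mul_right ?_ hc0
  calc |P r + Λ * r ^ 2 - (P s + Λ * s ^ 2)| * (2 * c)
      = (r ^ 2 - s ^ 2) * |P' c + 2 * Λ * c| := by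
        rw [← abs_of_pos hc0, ← abs_mul, ← hcauchy, abs_mul, abs_of_nonneg hsq]
    _ ≤ (r ^ 2 - s ^ 2) * (δ * c) :=
        mul_le_mul_of_nonneg_left (hP.abs_deriv_add_le c (Ioo_subset_Ioo hs hr hc)) hsq
    _ = δ / 2 * (r ^ 2 - s ^ 2) * (2 * c) := by ring

lemma abs_sub_radialMean_add_le (hP : IsNearDeSitter Λ R δ P P') (hr : r ∈ Icc 0 R) :
    |P r - radialMean P r + 2 * Λ / 3 * r ^ 2| ≤ δ / 3 * r ^ 2 := by
  have hQ : ContinuousOn (fun s => P s + Λ * s ^ 2) (Icc 0 R) :=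
    hP.continuousOn.add (by fun_prop)
  have hint : ∫ t in (0 : ℝ)..1, δ / 2 * (r ^ 2 - (r * t) ^ 2) = δ / 3 * r ^ 2 := by
    rw [intervalIntegral.integral_const_mul, intervalIntegral.integral_sub (by simp)
      (Continuous.intervalIntegrable (by fun_prop) 0 1)]
    simp only [mul_pow, intervalIntegral.integral_const, intervalIntegral.integral_const_mul,
      integral_pow, smul_eq_mul]
    ring
  have hmean := abs_sub_radialMean_le hQ hr (b := fun t => δ / 2 * (r ^ 2 - (r * t) ^ 2))
    (by fun_prop) fun t ht => hP.abs_sub_le (mul_mem_Icc_zero hr ht).1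
      (mul_le_of_le_one_right hr.1 ht.2) hr.2
  rw [radialMean_add_const_mul_sq Λ hP.continuousOn hr, hint] at hmean
  convert hmean using 2
  ring

lemma abs_radialMeanDeriv_add_le (hP : IsNearDeSitter Λ R δ P P') (hr : r ∈ Icc 0 R) :
    |radialMeanDeriv P r + 2 * Λ / 3 * r| ≤ δ / 3 * r := by
  rcases hr.1.eq_or_lt with rfl | hr0
  · simp [radialMeanDeriv]
  refine le_of_mul_le_mul_right ?_ hr0
  calc |radialMeanDeriv P r + 2 * Λ / 3 * r| * r
      = |P r - radialMean P r + 2 * Λ / 3 * r ^ 2| := by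
        rw [radialMeanDeriv, ← abs_of_pos hr0, ← abs_mul, abs_of_pos hr0]
        field_simp
    _ ≤ δ / 3 * r ^ 2 := hP.abs_sub_radialMean_add_le hr
    _ = δ / 3 * r * r := by ring

lemma abs_radialMean_sub_le (hP : IsNearDeSitter Λ R δ P P') (hr : r ∈ Icc 0 R) :
    |radialMean P r - (1 - Λ / 3 * r ^ 2)| ≤ 5 * δ / 6 * r ^ 2 := by
  have hprofile := hP.abs_sub_le le_rfl hr.1 hr.2
  have hmean := hP.abs_sub_radialMean_add_le hr
  rw [hP.zero] at hprofile
  rw [abs_le] at *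
  constructor <;> linarith

lemma continuousOn_radialMeanDeriv (hP : IsNearDeSitter Λ R δ P P') :
    ContinuousOn (radialMeanDeriv P) (Icc 0 R) := by
  refine continuousOn_div_self_of_abs_le (C := 2 * |Λ| / 3 + δ / 3)
    (hP.continuousOn.sub (continuousOn_radialMean hP.continuousOn)) fun r hr => ?_
  have hbound : |radialMeanDeriv P r| ≤ δ / 3 * r + |2 * Λ / 3 * r| := by
    have := abs_sub (radialMeanDeriv P r + 2 * Λ / 3 * r) (2 * Λ / 3 * r)
    rw [add_sub_cancel_right] at this
    linarith [hP.abs_radialMeanDeriv_add_le hr]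
  rw [abs_mul, abs_div, abs_mul, abs_two, abs_of_pos (three_pos (α := ℝ)), abs_of_nonneg hr.1]
    at hbound
  exact hbound.trans_eq (by ring)

lemma exists_hasDerivAt_radialMeanDeriv (hP : IsNearDeSitter Λ R δ P P') (hδ : 5 * δ ≤ 2 * Λ)
    (hr : r ∈ Ioo 0 R) : ∃ d, HasDerivAt (radialMeanDeriv P) d r ∧ d ≤ 0 ∧
      |d - radialMeanDeriv P r / r| ≤ 2 * δ := by
  have hr0 : 0 < r := hr.1
  have hprofile := hP.abs_deriv_add_le r hr
  have hmean := hP.abs_radialMeanDeriv_add_le (Ioo_subset_Icc_self hr)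
  have hquot := ((hP.hasDerivAt r hr).sub (hasDerivAt_radialMean hP.continuousOn hr)).div
    (hasDerivAt_id r) hr0.ne'
  refine ⟨(P' r - 2 * radialMeanDeriv P r) / r, hquot.congr_deriv ?_, ?_, ?_⟩
  · simp only [id, radialMeanDeriv, Pi.sub_apply]
    field_simp
    ring
  · refine div_nonpos_of_nonpos_of_nonneg ?_ hr0.le
    nlinarith [le_of_abs_le hprofile, neg_le_of_abs_le hmean]
  · rw [← sub_div, abs_div, abs_of_pos hr0, div_le_iff₀ hr0]
    rw [abs_le] at *
    constructor <;> linarith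

lemma radialMean_damping (hP : IsNearDeSitter Λ R δ P P') (hδ : 3 * δ ≤ 2 * Λ)
    (hr : r ∈ Ioo 0 R) :
    2 * radialMeanDeriv P r * (2 - r / R) - radialMean P r / R ≤ -1 / R := by
  have hrc := Ioo_subset_Icc_self hr
  have hR : 0 < R := hr.1.trans hr.2
  have hδ0 : 0 ≤ δ := hP.nonneg hR
  have hslope : radialMeanDeriv P r ≤ (δ / 3 - 2 * Λ / 3) * r := by
    linarith [le_of_abs_le (hP.abs_radialMeanDeriv_add_le hrc)]
  have hneg : (δ / 3 - 2 * Λ / 3) * r ≤ 0 :=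
    mul_nonpos_of_nonpos_of_nonneg (by linarith) hr.1.le
  have hφ : r / R ≤ 1 := div_le_one_of_le₀ hr.2.le hR.le
  have hweight : radialMeanDeriv P r * (2 - r / R) ≤ (δ / 3 - 2 * Λ / 3) * r := by nlinarith
  have hspeed : 1 - (Λ / 3 + 5 * δ / 6) * r * R ≤ radialMean P r := by
    have := mul_le_mul_of_nonneg_left hr.2.le
      (mul_nonneg (by linarith : 0 ≤ Λ / 3 + 5 * δ / 6) hr.1.le)
    linarith [neg_le_of_abs_le (hP.abs_radialMean_sub_le hrc)]
  calc 2 * radialMeanDeriv P r * (2 - r / R) - radialMean P r / R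
      ≤ 2 * ((δ / 3 - 2 * Λ / 3) * r) - (1 - (Λ / 3 + 5 * δ / 6) * r * R) / R := by
        rw [mul_assoc]; gcongr
    _ = -1 / R + (3 * δ / 2 - Λ) * r := by field_simp; ring
    _ ≤ -1 / R := add_le_of_nonpos_right (mul_nonpos_of_nonpos_of_nonneg (by linarith) hr.1.le)

theorem isDampedSpeed (hP : IsNearDeSitter Λ R δ P P') (hR : 0 < R) (hδ : 5 * δ ≤ 2 * Λ)
    (hhorizon : 6 + 5 * δ * R ^ 2 ≤ 2 * Λ * R ^ 2) :
    IsDampedSpeed R (2 * δ) (radialMean P) (radialMeanDeriv P) where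
  continuousOn := continuousOn_radialMean hP.continuousOn
  continuousOn_deriv := hP.continuousOn_radialMeanDeriv
  hasDerivAt _ hr := hasDerivAt_radialMean hP.continuousOn hr
  second_deriv _ hr := hP.exists_hasDerivAt_radialMeanDeriv hδ hr
  deriv_nonpos r hr := by
    have := mul_nonneg (by linarith [hP.nonneg hR] : 0 ≤ 2 * Λ - δ) hr.1
    linarith [le_of_abs_le (hP.abs_radialMeanDeriv_add_le hr)]
  zero_nonneg := by rw [radialMean_zero, hP.zero]; exact zero_le_one
  right_nonpos := by linarith [le_of_abs_le (hP.abs_radialMean_sub_le (right_mem_Icc.2 hR.le))]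
  damping _ hr := hP.radialMean_damping (by linarith [hP.nonneg hR]) hr

end IsNearDeSitter

end NearDeSitter

section Metric

variable {Λ κ R r : ℝ} {ε : ℝ≥0} {h : ℝ → ℝ → ℝ} {u : ℝ}

/-- The integrand `f (1 - Λ s²)` of which the metric coefficient `f̃` is the radial mean. -/
def speedProfile (Λ κ : ℝ) (h : ℝ → ℝ → ℝ) (u s : ℝ) : ℝ :=
  metricF κ h u s * (1 - Λ * s ^ 2)

/-- The tolerance within which data of Lipschitz constant `ε` keep the speed profile close to the
de Sitter profile. -/
def profileDefect (Λ κ R ε : ℝ) : ℝ := |κ| * ε ^ 2 * (1 + 3 * Λ * R ^ 2)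

lemma radAvg_eq_radialMean (h : ℝ → ℝ → ℝ) (u r : ℝ) : radAvg h u r = radialMean (h u) r := by
  rw [radAvg]
  split_ifs with hr
  · rw [hr, radialMean_zero]
  · rw [radialMean_of_ne_zero hr, one_div]

lemma metricFt_eq_radialMean (hF : ContinuousOn (metricF κ h u) (Icc 0 R)) (hr : r ∈ Icc 0 R) :
    metricFt Λ κ h u r = radialMean (speedProfile Λ κ h u) r := by
  rw [metricFt]
  split_ifs with hr0
  · simp [hr0, radialMean_zero, speedProfile, metricF]
  have hFr : ContinuousOn (metricF κ h u) (Icc 0 r) := hF.mono (Icc_subset_Icc_right hr.2)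
  have hsplit (s : ℝ) : speedProfile Λ κ h u s
      = metricF κ h u s - Λ * (metricF κ h u s * s ^ 2) := by rw [speedProfile]; ring
  rw [radialMean_of_ne_zero hr0]
  simp only [hsplit]
  rw [intervalIntegral.integral_sub (hFr.intervalIntegrable_of_Icc hr.1)
    (ContinuousOn.intervalIntegrable_of_Icc hr.1 (by fun_prop)),
    intervalIntegral.integral_const_mul]
  ring

lemma two_mul_coefG_eq_radialMeanDeriv (hF : ContinuousOn (metricF κ h u) (Icc 0 R))
    (hr : r ∈ Icc 0 R) : 2 * coefG Λ κ h u r = radialMeanDeriv (speedProfile Λ κ h u) r := by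
  rw [coefG, metricFt_eq_radialMean hF hr, radialMeanDeriv]
  generalize radialMean (speedProfile Λ κ h u) r = m
  rw [speedProfile]
  ring

lemma abs_sub_radAvg_le (hlip : LipschitzOnWith ε (h u) (Icc 0 R)) (hr : r ∈ Icc 0 R) :
    |h u r - radAvg h u r| ≤ ε * r := by
  rw [radAvg_eq_radialMean]
  refine (abs_sub_radialMean_le hlip.continuousOn hr continuous_const (b := fun _ => ε * r)
    fun t ht => ?_).trans_eq (by simp)
  have hrt := mul_mem_Icc_zero hr ht
  calc |h u r - h u (r * t)| ≤ ε * |r - r * t| := hlip.dist_le_mul r hr _ hrt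
    _ ≤ ε * r := by
      gcongr
      exact abs_sub_le_of_nonneg_of_le hr.1 le_rfl hrt.1 (mul_le_of_le_one_right hr.1 ht.2)

lemma abs_sq_sub_radAvg_div_le (hlip : LipschitzOnWith ε (h u) (Icc 0 R)) (hr : r ∈ Icc 0 R) :
    |(h u r - radAvg h u r) ^ 2 / r| ≤ ε ^ 2 * r := by
  rw [abs_div, abs_pow, abs_of_nonneg hr.1]
  refine div_le_of_le_mul₀ hr.1 (by have := hr.1; positivity) ?_
  calc |h u r - radAvg h u r| ^ 2 ≤ (ε * r) ^ 2 := by gcongr; exact abs_sub_radAvg_le hlip hr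
    _ = ε ^ 2 * r * r := by ring

lemma continuousOn_sq_sub_radAvg_div (hlip : LipschitzOnWith ε (h u) (Icc 0 R)) :
    ContinuousOn (fun s => (h u s - radAvg h u s) ^ 2 / s) (Icc 0 R) := by
  have hmean : ContinuousOn (fun s => radAvg h u s) (Icc 0 R) := by
    simpa only [radAvg_eq_radialMean] using continuousOn_radialMean hlip.continuousOn
  exact continuousOn_div_self_of_abs_le ((hlip.continuousOn.sub hmean).pow 2)
    fun r hr => abs_sq_sub_radAvg_div_le hlip hr

lemma continuousOn_metricF (hlip : LipschitzOnWith ε (h u) (Icc 0 R)) :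
    ContinuousOn (metricF κ h u) (Icc 0 R) := by
  intro r hr
  have hR : 0 ≤ R := hr.1.trans hr.2
  have hprim := intervalIntegral.continuousOn_primitive_interval (μ := MeasureTheory.volume)
    (uIcc_of_le hR ▸ (continuousOn_sq_sub_radAvg_div hlip).integrableOn_Icc)
  rw [uIcc_of_le hR] at hprim
  exact ((hprim.const_mul (κ / 2)).rexp) r hr

lemma hasDerivAt_metricF (hlip : LipschitzOnWith ε (h u) (Icc 0 R)) (hr : r ∈ Ioo 0 R) :
    HasDerivAt (metricF κ h u)
      (metricF κ h u r * (κ / 2 * ((h u r - radAvg h u r) ^ 2 / r))) r :=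
  ((hasDerivAt_integral_of_continuousOn_Icc (continuousOn_sq_sub_radAvg_div hlip) hr).const_mul
    (κ / 2)).exp

lemma abs_metricF_sub_one_le (hlip : LipschitzOnWith ε (h u) (Icc 0 R))
    (hε : |κ| * ε ^ 2 * R ^ 2 ≤ 1) (hr : r ∈ Icc 0 R) :
    |metricF κ h u r - 1| ≤ |κ| * ε ^ 2 * r ^ 2 := by
  have hint : |∫ s in (0 : ℝ)..r, (h u s - radAvg h u s) ^ 2 / s| ≤ ε ^ 2 * r * |r - 0| := by
    rw [← Real.norm_eq_abs]
    refine intervalIntegral.norm_integral_le_of_norm_le_const fun s hs => ?_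
    rw [uIoc_of_le hr.1] at hs
    refine (abs_sq_sub_radAvg_div_le hlip ⟨hs.1.le, hs.2.trans hr.2⟩).trans ?_
    gcongr
    exact hs.2
  rw [sub_zero, abs_of_nonneg hr.1] at hint
  have hexponent : |κ / 2 * ∫ s in (0 : ℝ)..r, (h u s - radAvg h u s) ^ 2 / s|
      ≤ |κ| * ε ^ 2 * r ^ 2 / 2 :=
    calc _ = |κ| / 2 * |∫ s in (0 : ℝ)..r, (h u s - radAvg h u s) ^ 2 / s| := by
          rw [abs_mul, abs_div, abs_two]
      _ ≤ |κ| / 2 * (ε ^ 2 * r * r) := by gcongr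
      _ = |κ| * ε ^ 2 * r ^ 2 / 2 := by ring
  have hmono : |κ| * ε ^ 2 * r ^ 2 ≤ |κ| * ε ^ 2 * R ^ 2 := by
    gcongr
    exacts [hr.1, hr.2]
  exact (Real.abs_exp_sub_one_le (hexponent.trans (by linarith))).trans (by linarith)

theorem isNearDeSitter_speedProfile (hΛ : 0 ≤ Λ) (hlip : LipschitzOnWith ε (h u) (Icc 0 R))
    (hε : |κ| * ε ^ 2 * R ^ 2 ≤ 1) :
    IsNearDeSitter Λ R (profileDefect Λ κ R ε) (speedProfile Λ κ h u) fun r =>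
      metricF κ h u r * (κ / 2 * ((h u r - radAvg h u r) ^ 2 / r)) * (1 - Λ * r ^ 2)
        + metricF κ h u r * -(2 * Λ * r) where
  continuousOn := (continuousOn_metricF hlip).mul (by fun_prop)
  zero := by simp [speedProfile, metricF]
  hasDerivAt r hr := (hasDerivAt_metricF hlip hr).mul
    ((((hasDerivAt_pow 2 r).const_mul Λ).const_sub 1).congr_deriv (by norm_num; ring))
  abs_deriv_add_le r hr := by
    have hr0 : 0 < r := hr.1
    have hrc := Ioo_subset_Icc_self hr
    have hFsub := abs_metricF_sub_one_le hlip hε hrc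
    have hsq : r ^ 2 ≤ R ^ 2 := by gcongr; exact hr.2.le
    have hF : |metricF κ h u r| ≤ 2 := by
      have : |κ| * ε ^ 2 * r ^ 2 ≤ |κ| * ε ^ 2 * R ^ 2 := by gcongr
      rw [abs_le] at *
      constructor <;> linarith
    have hpoly : |1 - Λ * r ^ 2| ≤ 1 + Λ * R ^ 2 := by
      have := mul_le_mul_of_nonneg_left hsq hΛ
      have := mul_nonneg hΛ (sq_nonneg r)
      rw [abs_le]
      constructor <;> linarith
    have hdensity := abs_sq_sub_radAvg_div_le hlip hrc
    calc _ = |metricF κ h u r * (κ / 2 * ((h u r - radAvg h u r) ^ 2 / r)) * (1 - Λ * r ^ 2)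
            + -(2 * Λ * r) * (metricF κ h u r - 1)| := by congr 1; ring
      _ ≤ |metricF κ h u r| * (|κ| / 2 * |(h u r - radAvg h u r) ^ 2 / r|) * |1 - Λ * r ^ 2|
            + 2 * Λ * r * |metricF κ h u r - 1| := by
          refine (abs_add_le _ _).trans_eq ?_
          rw [abs_mul, abs_mul, abs_mul (κ / 2), abs_div κ, abs_two, abs_mul (-_), abs_neg,
            abs_of_nonneg (by positivity : 0 ≤ 2 * Λ * r)]
      _ ≤ 2 * (|κ| / 2 * (ε ^ 2 * r)) * (1 + Λ * R ^ 2)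
            + 2 * Λ * r * (|κ| * ε ^ 2 * R ^ 2) := by
          gcongr
          exact hFsub.trans (by gcongr)
      _ = profileDefect Λ κ R ε * r := by rw [profileDefect]; ring

end Metric

namespace IsC1Solution

variable {Λ κ R : ℝ} {h : ℝ → ℝ → ℝ} {u r : ℝ}

lemma hasDerivWithinAt_time (hs : IsC1Solution Λ κ R h) (hu : u ∈ Ici 0) (hr : r ∈ Icc 0 R) :
    HasDerivWithinAt (fun u' => h u' r) (pdU h u r) (Ici 0) u :=
  (hs.2.1 u hu r hr).1.hasDerivWithinAt

lemma hasDerivWithinAt_radius (hs : IsC1Solution Λ κ R h) (hu : u ∈ Ici 0) (hr : r ∈ Icc 0 R) :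
    HasDerivWithinAt (h u) (pdR R h u r) (Icc 0 R) r :=
  (hs.2.1 u hu r hr).2.hasDerivWithinAt

lemma continuousOn_pdU_slice (hs : IsC1Solution Λ κ R h) (hu : u ∈ Ici 0) :
    ContinuousOn (pdU h u) (Icc 0 R) :=
  hs.2.2.1.comp (f := fun r => (u, r)) (by fun_prop) fun _ hr => ⟨hu, hr⟩

lemma continuousOn_pdR_slice (hs : IsC1Solution Λ κ R h) (hu : u ∈ Ici 0) :
    ContinuousOn (pdR R h u) (Icc 0 R) :=
  hs.2.2.2.1.comp (f := fun r => (u, r)) (by fun_prop) fun _ hr => ⟨hu, hr⟩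

lemma lipschitzOnWith {ε : ℝ≥0} (hs : IsC1Solution Λ κ R h) (hu : u ∈ Ici 0)
    (hε : ∀ r ∈ Icc 0 R, |pdR R h u r| ≤ ε) : LipschitzOnWith ε (h u) (Icc 0 R) :=
  (convex_Icc 0 R).lipschitzOnWith_of_nnnorm_hasDerivWithin_le
    (fun _ hr => hs.hasDerivWithinAt_radius hu hr) hε

lemma two_mul_pdU_eq_transportOp {ε : ℝ≥0} {δ : ℝ} (hs : IsC1Solution Λ κ R h) (hR : 0 < R)
    (hu : u ∈ Ici 0) (hlip : LipschitzOnWith ε (h u) (Icc 0 R))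
    (hV : IsDampedSpeed R δ (radialMean (speedProfile Λ κ h u))
      (radialMeanDeriv (speedProfile Λ κ h u))) (hr : r ∈ Icc 0 R) :
    2 * pdU h u r = transportOp (radialMean (speedProfile Λ κ h u))
      (radialMeanDeriv (speedProfile Λ κ h u)) (h u) (pdR R h u) r := by
  have hop : ContinuousOn (transportOp (radialMean (speedProfile Λ κ h u))
      (radialMeanDeriv (speedProfile Λ κ h u)) (h u) (pdR R h u)) (Icc 0 R) :=
    (hV.continuousOn.mul (hs.continuousOn_pdR_slice hu)).add
      (hV.continuousOn_deriv.mul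
        (hlip.continuousOn.sub (continuousOn_radialMean hlip.continuousOn)))
  have hIoc : EqOn (fun r => 2 * pdU h u r) (transportOp (radialMean (speedProfile Λ κ h u))
      (radialMeanDeriv (speedProfile Λ κ h u)) (h u) (pdR R h u)) (Ioc 0 R) := fun r hr => by
    have hrc := Ioc_subset_Icc_self hr
    have heq := hs.2.2.2.2 u hu r hr
    have hG := two_mul_coefG_eq_radialMeanDeriv (Λ := Λ) (continuousOn_metricF (κ := κ) hlip) hrc
    rw [metricFt_eq_radialMean (continuousOn_metricF hlip) hrc, radAvg_eq_radialMean] at heq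
    simp only [transportOp, ← hG]
    linarith
  exact hIoc.of_subset_closure ((hs.continuousOn_pdU_slice hu).const_mul 2) hop Ioc_subset_Icc_self
    (closure_Ioc hR.ne).ge hr

theorem isDampedEvolution {ε : ℝ≥0} (hs : IsC1Solution Λ κ R h) (hΛ : 0 ≤ Λ) (hR : 0 < R)
    (hlip : ∀ u ∈ Ici (0 : ℝ), LipschitzOnWith ε (h u) (Icc 0 R))
    (hε : |κ| * ε ^ 2 * R ^ 2 ≤ 1)
    (hΛε : 5 * profileDefect Λ κ R ε ≤ 2 * Λ)
    (hhorizon : 6 + 5 * profileDefect Λ κ R ε * R ^ 2 ≤ 2 * Λ * R ^ 2) :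
    IsDampedEvolution R (2 * profileDefect Λ κ R ε) h (pdU h) (pdR R h)
      (fun u => radialMean (speedProfile Λ κ h u))
      fun u => radialMeanDeriv (speedProfile Λ κ h u) :=
  have hspeed u (hu : u ∈ Ici (0 : ℝ)) :=
    (isNearDeSitter_speedProfile hΛ (hlip u hu) hε).isDampedSpeed hR hΛε hhorizon
  { continuousOn := hs.1
    hasDerivWithinAt_time := fun _ hu _ hr => hs.hasDerivWithinAt_time hu hr
    hasDerivWithinAt_radius := fun _ hu _ hr => hs.hasDerivWithinAt_radius hu hr
    isDampedSpeed := hspeed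
    equation := fun u hu _ hr =>
      hs.two_mul_pdU_eq_transportOp hR hu (hlip u hu) (hspeed u hu) hr }

end IsC1Solution

lemma exists_pos_amplitude (κ : ℝ) {Λ R : ℝ} (hΛ : 0 < Λ) (hR : 3 < Λ * R ^ 2) :
    ∃ ε : ℝ≥0, 0 < ε ∧ |κ| * ε ^ 2 * R ^ 2 ≤ 1 ∧
      5 * profileDefect Λ κ R ε ≤ 2 * Λ ∧
      6 + 5 * profileDefect Λ κ R ε * R ^ 2 ≤ 2 * Λ * R ^ 2 ∧
      4 * (2 * profileDefect Λ κ R ε) * R ^ 2 ≤ 1 := by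
  have hev {c a b : ℝ} (hab : a < b) : ∀ᶠ ε : ℝ≥0 in 𝓝[>] 0, a + c * (ε : ℝ) ^ 2 ≤ b := by
    have hcont : Continuous fun ε : ℝ≥0 => a + c * (ε : ℝ) ^ 2 := by fun_prop
    have hlim := (hcont.tendsto 0).mono_left (nhdsWithin_le_nhds (s := Ioi 0))
    exact (hlim.eventually_lt_const (by simpa using hab)).mono fun _ => le_of_lt
  obtain ⟨ε, hpos, h₁, h₂, h₃, h₄⟩ := ((eventually_mem_nhdsWithin (a := (0 : ℝ≥0))).and
    ((hev (c := |κ| * R ^ 2) one_pos).and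
    ((hev (c := 5 * |κ| * (1 + 3 * Λ * R ^ 2)) (mul_pos two_pos hΛ)).and
    ((hev (c := 5 * |κ| * (1 + 3 * Λ * R ^ 2) * R ^ 2) (by linarith : 6 < 2 * Λ * R ^ 2)).and
    (hev (c := 8 * |κ| * (1 + 3 * Λ * R ^ 2) * R ^ 2) one_pos))))).exists
  simp only [profileDefect]
  exact ⟨ε, hpos, by linarith, by linarith, by linarith, by linarith⟩

theorem energy_exponential_decay_general (Λ κ R : ℝ) (hΛ : 0 < Λ) (hR : √(3 / Λ) < R) :
    ∃ ε > (0 : ℝ), ∀ h : ℝ → ℝ → ℝ, IsC1Solution Λ κ R h →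
      (∀ u ∈ Ici (0 : ℝ), ∀ r ∈ Icc (0 : ℝ) R, |pdR R h u r| < ε) →
      ∀ u ∈ Ici (0 : ℝ),
        sSup ((fun r => |pdR R h u r|) '' Icc 0 R)
          ≤ 2 * sSup ((fun r => |pdR R h 0 r|) '' Icc 0 R) * exp (-(u / (8 * R))) := by
  have hR0 : 0 < R := (Real.sqrt_nonneg _).trans_lt hR
  have hhorizon : 3 < Λ * R ^ 2 := by
    rw [mul_comm, ← div_lt_iff₀ hΛ]
    exact (Real.sqrt_lt' hR0).1 hR
  obtain ⟨ε, hε, hκε, hΛε, hRε, hδ⟩ := exists_pos_amplitude κ hΛ hhorizon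
  refine ⟨ε, hε, fun h hs hsmall u hu => ?_⟩
  have hevol := hs.isDampedEvolution hΛ.le hR0
    (fun u hu => hs.lipschitzOnWith hu fun r hr => (hsmall u hu r hr).le) hκε hΛε hRε
  have hbdd : BddAbove ((fun r => |pdR R h 0 r|) '' Icc 0 R) :=
    ⟨ε, forall_mem_image.2 fun r hr => (hsmall 0 self_mem_Ici r hr).le⟩
  refine csSup_le ((nonempty_Icc.2 hR0.le).image _) (forall_mem_image.2 fun r hr => ?_)
  exact hevol.abs_deriv_le hR0 hδ (fun s hs => le_csSup hbdd (mem_image_of_mem _ hs)) hu hr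

/-- Exponential decay of the energy `ℰ₁(u) = sup_{0≤r≤R}|∂_r h(u,r)|`:
there are `ε, C, Ĥ > 0` (depending only on `Λ, κ, R`) such that any C¹ solution with
`sup(|h|+|∂_r h|) < ε` satisfies `ℰ₁(u) ≤ C ℰ₁(0) e^{−2Ĥu}` for all `u ≥ 0`. -/
theorem energy_exponential_decay
    (Λ κ R : ℝ) (hΛ : 0 < Λ) (hκ : 0 < κ) (hR : Real.sqrt (3 / Λ) < R) :
    ∃ ε > (0:ℝ), ∃ C > (0:ℝ), ∃ Hhat > (0:ℝ), ∀ h : ℝ → ℝ → ℝ, IsC1Solution Λ κ R h →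
      (∀ u ∈ Ici (0:ℝ), ∀ r ∈ Icc (0:ℝ) R, |h u r| + |pdR R h u r| < ε) →
      ∀ u ∈ Ici (0:ℝ),
        sSup ((fun r => |pdR R h u r|) '' Icc 0 R)
          ≤ C * sSup ((fun r => |pdR R h 0 r|) '' Icc 0 R) * Real.exp (-2 * Hhat * u) := by
  have hR0 : 0 < R := (Real.sqrt_nonneg _).trans_lt hR
  obtain ⟨ε, hε, hdecay⟩ := energy_exponential_decay_general Λ κ R hΛ hR
  refine ⟨ε, hε, 2, two_pos, 1 / (16 * R), by positivity, fun h hs hsmall u hu => ?_⟩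
  have hrate : -2 * (1 / (16 * R)) * u = -(u / (8 * R)) := by ring
  rw [hrate]
  exact hdecay h hs (fun u hu r hr => (le_add_of_nonneg_left (abs_nonneg _)).trans_lt
    (hsmall u hu r hr)) u hu
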